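/- Let τ₁, τ₂ : ℝ³ → ℝ (coordinates (t,x,y)) be smooth and everywhere positive, satisfying both bilinear Bäcklund relations: (i) τ₁∂_x²τ₂ − 2(∂_xτ₁)(∂_xτ₂) + τ₂∂_x²τ₁ + τ₂∂_yτ₁ − τ₁∂_yτ₂ = 0, and (ii) 4(τ₁∂_tτ₂ − τ₂∂_tτ₁) + 3(τ₁∂_x∂_yτ₂ − ∂_xτ₁∂_yτ₂ − ∂_yτ₁∂_xτ₂ + τ₂∂_x∂_yτ₁) + τ₁∂_x³τ₂ − 3∂_xτ₁∂_x²τ₂ + 3∂_x²τ₁∂_xτ₂ − τ₂∂_x³τ₁ = 0. Set u₁ := 2∂_x² log τ₁, u₂ := 2∂_x² log τ₂, v₂ := ∂_x log(τ₂/τ₁). Then 4∂_t log(τ₂/τ₁) + ∂_x(2u₂ + u₁) + 6∂_x(∂_yτ₁/τ₁) + 6v₂u₂ + 4v₂³ = 0. -/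

import Mathlib

noncomputable def pt {E : Type*} [NormedAddCommGroup E] [NormedSpace ℝ E]
    (f : ℝ → ℝ → ℝ → E) : ℝ → ℝ → ℝ → E :=
  fun t x y => deriv (fun s => f s x y) t

noncomputable def px {E : Type*} [NormedAddCommGroup E] [NormedSpace ℝ E]
    (f : ℝ → ℝ → ℝ → E) : ℝ → ℝ → ℝ → E :=
  fun t x y => deriv (fun s => f t s y) x

noncomputable def py {E : Type*} [NormedAddCommGroup E] [NormedSpace ℝ E]
    (f : ℝ → ℝ → ℝ → E) : ℝ → ℝ → ℝ → E :=
  fun t x y => deriv (fun s => f t x s) y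

/-! Write `τ₁ = exp a`, `τ₂ = exp b`, `φ = b - a = log (τ₂ / τ₁)` and `σ = a + b`. Divided by
`τ₁ τ₂`, the two bilinear relations become
`φ_y = σ_xx + φ_x²` and `4 φ_t + 3 (σ_xy + φ_x φ_y) + φ_xxx + 3 φ_x σ_xx + φ_x³ = 0`.
Since `σ_xy = 2 a_xy + φ_xy`, the first relation and its `x`-derivative remove `φ_y` and `φ_xy`
from the second, and `φ_xx + σ_xx = 2 b_xx` collects the remaining terms. -/

section PartialDerivatives

variable {E : Type*} [NormedAddCommGroup E] [NormedSpace ℝ E] {f g : ℝ → ℝ → ℝ → E}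

theorem hasDerivAt_pt (hf : Differentiable ℝ ↿f) (t x y : ℝ) :
    HasDerivAt (fun s => f s x y) (pt f t x y) t :=
  (hf.comp (by fun_prop : Differentiable ℝ fun s : ℝ => (s, x, y)) t).hasDerivAt

theorem hasDerivAt_px (hf : Differentiable ℝ ↿f) (t x y : ℝ) :
    HasDerivAt (fun s => f t s y) (px f t x y) x :=
  (hf.comp (by fun_prop : Differentiable ℝ fun s : ℝ => (t, s, y)) x).hasDerivAt

theorem hasDerivAt_py (hf : Differentiable ℝ ↿f) (t x y : ℝ) :
    HasDerivAt (fun s => f t x s) (py f t x y) y :=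
  (hf.comp (by fun_prop : Differentiable ℝ fun s : ℝ => (t, x, s)) y).hasDerivAt

theorem px_eq_fderiv (hf : Differentiable ℝ ↿f) (t x y : ℝ) :
    px f t x y = fderiv ℝ ↿f (t, x, y) (0, 1, 0) :=
  ((hf (t, x, y)).hasFDerivAt.comp_hasDerivAt (f := fun s => (t, s, y)) x
    ((hasDerivAt_const x t).prodMk ((hasDerivAt_id' x).prodMk (hasDerivAt_const x y)))).deriv

theorem py_eq_fderiv (hf : Differentiable ℝ ↿f) (t x y : ℝ) :
    py f t x y = fderiv ℝ ↿f (t, x, y) (0, 0, 1) :=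
  ((hf (t, x, y)).hasFDerivAt.comp_hasDerivAt (f := fun s => (t, x, s)) y
    ((hasDerivAt_const y t).prodMk ((hasDerivAt_const y x).prodMk (hasDerivAt_id' y)))).deriv

theorem contDiff_px {m n : WithTop ℕ∞} (hf : ContDiff ℝ n ↿f) (hmn : m + 1 ≤ n) :
    ContDiff ℝ m ↿(px f) := by
  have hf' : Differentiable ℝ ↿f := (hf.of_le (le_add_self.trans hmn)).differentiable one_ne_zero
  have hpx : ↿(px f) = fun p => fderiv ℝ ↿f p (0, 1, 0) :=
    funext fun p => px_eq_fderiv hf' p.1 p.2.1 p.2.2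
  rw [hpx]
  exact (hf.fderiv_right hmn).clm_apply contDiff_const

theorem contDiff_py {m n : WithTop ℕ∞} (hf : ContDiff ℝ n ↿f) (hmn : m + 1 ≤ n) :
    ContDiff ℝ m ↿(py f) := by
  have hf' : Differentiable ℝ ↿f := (hf.of_le (le_add_self.trans hmn)).differentiable one_ne_zero
  have hpy : ↿(py f) = fun p => fderiv ℝ ↿f p (0, 0, 1) :=
    funext fun p => py_eq_fderiv hf' p.1 p.2.1 p.2.2
  rw [hpy]
  exact (hf.fderiv_right hmn).clm_apply contDiff_const

theorem differentiable_px {n : WithTop ℕ∞} (hf : ContDiff ℝ n ↿f) (hn : 2 ≤ n) :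
    Differentiable ℝ ↿(px f) :=
  (contDiff_px hf (one_add_one_eq_two.trans_le hn)).differentiable one_ne_zero

theorem differentiable_py {n : WithTop ℕ∞} (hf : ContDiff ℝ n ↿f) (hn : 2 ≤ n) :
    Differentiable ℝ ↿(py f) :=
  (contDiff_py hf (one_add_one_eq_two.trans_le hn)).differentiable one_ne_zero

theorem differentiable_px_px {n : WithTop ℕ∞} (hf : ContDiff ℝ n ↿f) (hn : 3 ≤ n) :
    Differentiable ℝ ↿(px (px f)) :=
  differentiable_px (contDiff_px hf (two_add_one_eq_three.trans_le hn)) le_rfl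

theorem px_add (hf : Differentiable ℝ ↿f) (hg : Differentiable ℝ ↿g) :
    px (f + g) = px f + px g := by
  funext t x y
  exact ((hasDerivAt_px hf t x y).add (hasDerivAt_px hg t x y)).deriv

theorem px_sub (hf : Differentiable ℝ ↿f) (hg : Differentiable ℝ ↿g) :
    px (f - g) = px f - px g := by
  funext t x y
  exact ((hasDerivAt_px hf t x y).sub (hasDerivAt_px hg t x y)).deriv

theorem pt_sub (hf : Differentiable ℝ ↿f) (hg : Differentiable ℝ ↿g) :
    pt (f - g) = pt f - pt g := by
  funext t x y
  exact ((hasDerivAt_pt hf t x y).sub (hasDerivAt_pt hg t x y)).deriv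

end PartialDerivatives

section Product

variable {A : Type*} [NormedRing A] [NormedAlgebra ℝ A] {f g : ℝ → ℝ → ℝ → A}

theorem px_mul (hf : Differentiable ℝ ↿f) (hg : Differentiable ℝ ↿g) :
    px (f * g) = px f * g + f * px g := by
  funext t x y
  exact ((hasDerivAt_px hf t x y).mul (hasDerivAt_px hg t x y)).deriv

theorem px_const_mul_add_const_mul (c d : A) (hf : Differentiable ℝ ↿f)
    (hg : Differentiable ℝ ↿g) :
    px (fun t x y => c * f t x y + d * g t x y) =
      fun t x y => c * px f t x y + d * px g t x y := by
  funext t x y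
  exact (((hasDerivAt_px hf t x y).const_mul c).add ((hasDerivAt_px hg t x y).const_mul d)).deriv

end Product

section Exponential

variable {f a : ℝ → ℝ → ℝ → ℝ}

theorem pt_exp (ha : Differentiable ℝ ↿a) :
    pt (fun t x y => Real.exp (a t x y)) = (fun t x y => Real.exp (a t x y)) * pt a := by
  funext t x y
  exact (hasDerivAt_pt ha t x y).exp.deriv

theorem px_exp (ha : Differentiable ℝ ↿a) :
    px (fun t x y => Real.exp (a t x y)) = (fun t x y => Real.exp (a t x y)) * px a := by
  funext t x y
  exact (hasDerivAt_px ha t x y).exp.deriv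

theorem py_exp (ha : Differentiable ℝ ↿a) :
    py (fun t x y => Real.exp (a t x y)) = (fun t x y => Real.exp (a t x y)) * py a := by
  funext t x y
  exact (hasDerivAt_py ha t x y).exp.deriv

theorem exists_contDiff_eq_exp {n : WithTop ℕ∞} (hf : ContDiff ℝ n ↿f)
    (hpos : ∀ t x y, 0 < f t x y) :
    ∃ a : ℝ → ℝ → ℝ → ℝ, ContDiff ℝ n ↿a ∧ f = fun t x y => Real.exp (a t x y) :=
  ⟨fun t x y => Real.log (f t x y), hf.log fun p => (hpos p.1 p.2.1 p.2.2).ne',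
    by simp only [Real.exp_log (hpos _ _ _)]⟩

theorem log_exp_div_exp (f g : ℝ → ℝ → ℝ → ℝ) :
    (fun t x y => Real.log (Real.exp (f t x y) / Real.exp (g t x y))) = f - g := by
  simp only [← Real.exp_sub, Real.log_exp]
  rfl

theorem py_exp_div_exp (ha : Differentiable ℝ ↿a) :
    (fun t x y => py (fun t x y => Real.exp (a t x y)) t x y / Real.exp (a t x y)) = py a := by
  funext t x y
  rw [py_exp ha]
  exact mul_div_cancel_left₀ _ (Real.exp_ne_zero _)

theorem px_exp_mul (ha : Differentiable ℝ ↿a) (hf : Differentiable ℝ ↿f) :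
    px ((fun t x y => Real.exp (a t x y)) * f) =
      (fun t x y => Real.exp (a t x y)) * (px f + px a * f) := by
  have hexp : Differentiable ℝ ↿fun t x y => Real.exp (a t x y) := ha.exp
  rw [px_mul hexp hf, px_exp ha]
  ring

theorem px_px_exp (ha : Differentiable ℝ ↿a) (hax : Differentiable ℝ ↿(px a)) :
    px (px fun t x y => Real.exp (a t x y)) =
      (fun t x y => Real.exp (a t x y)) * (px (px a) + px a ^ 2) := by
  rw [px_exp ha, px_exp_mul ha hax, sq]

theorem px_px_px_exp (ha : Differentiable ℝ ↿a) (hax : Differentiable ℝ ↿(px a))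
    (haxx : Differentiable ℝ ↿(px (px a))) :
    px (px (px fun t x y => Real.exp (a t x y))) =
      (fun t x y => Real.exp (a t x y)) *
        (px (px (px a)) + 3 * px a * px (px a) + px a ^ 3) := by
  have hax_sq : Differentiable ℝ ↿(px a * px a) := hax.mul hax
  rw [px_px_exp ha hax, sq, px_exp_mul ha (haxx.add hax_sq), px_add haxx hax_sq, px_mul hax hax]
  ring

theorem px_py_exp (ha : Differentiable ℝ ↿a) (hay : Differentiable ℝ ↿(py a)) :
    px (py fun t x y => Real.exp (a t x y)) =
      (fun t x y => Real.exp (a t x y)) * (px (py a) + px a * py a) := by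
  rw [py_exp ha, px_exp_mul ha hay]

end Exponential

/-- The left-hand side of the first bilinear Bäcklund relation of KP-II, which relates the `x`- and
`y`-derivatives of two tau functions. -/
noncomputable def backlundSpace (τ₁ τ₂ : ℝ → ℝ → ℝ → ℝ) : ℝ → ℝ → ℝ → ℝ :=
  τ₁ * px (px τ₂) - 2 * px τ₁ * px τ₂ + τ₂ * px (px τ₁) + τ₂ * py τ₁ - τ₁ * py τ₂

/-- The left-hand side of the second bilinear Bäcklund relation of KP-II, which governs the
`t`-derivatives of two tau functions. -/
noncomputable def backlundTime (τ₁ τ₂ : ℝ → ℝ → ℝ → ℝ) : ℝ → ℝ → ℝ → ℝ :=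
  4 * (τ₁ * pt τ₂ - τ₂ * pt τ₁)
    + 3 * (τ₁ * px (py τ₂) - px τ₁ * py τ₂ - py τ₁ * px τ₂ + τ₂ * px (py τ₁))
    + τ₁ * px (px (px τ₂)) - 3 * px τ₁ * px (px τ₂) + 3 * px (px τ₁) * px τ₂
    - τ₂ * px (px (px τ₁))

section Potentials

variable {a b : ℝ → ℝ → ℝ → ℝ}

theorem backlundSpace_exp (ha : ContDiff ℝ 2 ↿a) (hb : ContDiff ℝ 2 ↿b) :
    backlundSpace (fun t x y => Real.exp (a t x y)) (fun t x y => Real.exp (b t x y)) =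
      (fun t x y => Real.exp (a t x y)) * (fun t x y => Real.exp (b t x y)) *
        (px (px a) + px (px b) + (px b - px a) ^ 2 - (py b - py a)) := by
  have da := ha.differentiable two_ne_zero
  have db := hb.differentiable two_ne_zero
  rw [backlundSpace, px_px_exp da (differentiable_px ha le_rfl),
    px_px_exp db (differentiable_px hb le_rfl), px_exp da, px_exp db, py_exp da, py_exp db]
  ring

theorem backlundTime_exp (ha : ContDiff ℝ 3 ↿a) (hb : ContDiff ℝ 3 ↿b) :
    backlundTime (fun t x y => Real.exp (a t x y)) (fun t x y => Real.exp (b t x y)) =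
      (fun t x y => Real.exp (a t x y)) * (fun t x y => Real.exp (b t x y)) *
        (4 * (pt b - pt a) + 3 * (px (py a) + px (py b) + (px b - px a) * (py b - py a))
          + (px (px (px b)) - px (px (px a))) + 3 * (px b - px a) * (px (px a) + px (px b))
          + (px b - px a) ^ 3) := by
  have h23 : (2 : WithTop ℕ∞) ≤ 3 := by norm_num
  have da := ha.differentiable three_ne_zero
  have db := hb.differentiable three_ne_zero
  have dax := differentiable_px ha h23
  have dbx := differentiable_px hb h23
  rw [backlundTime, px_px_px_exp da dax (differentiable_px_px ha le_rfl),
    px_px_px_exp db dbx (differentiable_px_px hb le_rfl), px_px_exp da dax, px_px_exp db dbx,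
    px_py_exp da (differentiable_py ha h23), px_py_exp db (differentiable_py hb h23),
    px_exp da, px_exp db, py_exp da, py_exp db, pt_exp da, pt_exp db]
  ring

theorem exp_mul_exp_mul_eq_zero_iff {f : ℝ → ℝ → ℝ → ℝ} :
    (fun t x y => Real.exp (a t x y)) * (fun t x y => Real.exp (b t x y)) * f = 0 ↔ f = 0 := by
  simp [funext_iff, Real.exp_ne_zero]

theorem px_py_sub_px_py_of_space (ha : ContDiff ℝ 3 ↿a) (hb : ContDiff ℝ 3 ↿b)
    (hspace : px (px a) + px (px b) + (px b - px a) ^ 2 - (py b - py a) = 0) :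
    px (py b) - px (py a) =
      px (px (px a)) + px (px (px b)) + 2 * (px b - px a) * (px (px b) - px (px a)) := by
  have h23 : (2 : WithTop ℕ∞) ≤ 3 := by norm_num
  have dax := differentiable_px ha h23
  have dbx := differentiable_px hb h23
  have daxx := differentiable_px_px ha le_rfl
  have dbxx := differentiable_px_px hb le_rfl
  have dφx : Differentiable ℝ ↿(px b - px a) := dbx.sub dax
  have dσxx : Differentiable ℝ ↿(px (px a) + px (px b)) := daxx.add dbxx
  rw [← px_sub (differentiable_py hb h23) (differentiable_py ha h23), ← sub_eq_zero.mp hspace, sq,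
    px_add dσxx (dφx.mul dφx), px_add daxx dbxx, px_mul dφx dφx, px_sub dbx dax]
  ring

theorem potential_time_identity (ha : ContDiff ℝ 3 ↿a) (hb : ContDiff ℝ 3 ↿b)
    (hspace : px (px a) + px (px b) + (px b - px a) ^ 2 - (py b - py a) = 0)
    (htime : 4 * (pt b - pt a) + 3 * (px (py a) + px (py b) + (px b - px a) * (py b - py a))
      + (px (px (px b)) - px (px (px a))) + 3 * (px b - px a) * (px (px a) + px (px b))
      + (px b - px a) ^ 3 = 0) :
    4 * (pt b - pt a) + (4 * px (px (px b)) + 2 * px (px (px a))) + 6 * px (py a)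
      + 12 * (px b - px a) * px (px b) + 4 * (px b - px a) ^ 3 = 0 := by
  linear_combination htime + 3 * (px b - px a) * hspace - 3 * px_py_sub_px_py_of_space ha hb hspace

end Potentials

theorem bilinear_backlund_time_identity_general
    (τ₁ τ₂ : ℝ → ℝ → ℝ → ℝ)
    (hτ₁ : ContDiff ℝ 3 ↿τ₁) (hτ₂ : ContDiff ℝ 3 ↿τ₂)
    (hpos₁ : ∀ t x y, 0 < τ₁ t x y) (hpos₂ : ∀ t x y, 0 < τ₂ t x y)
    (hspace : backlundSpace τ₁ τ₂ = 0) (htime : backlundTime τ₁ τ₂ = 0) :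
    ∀ t x y,
      4 * pt (fun a b c => Real.log (τ₂ a b c / τ₁ a b c)) t x y
        + px (fun a b c =>
            2 * (2 * px (px fun d e f => Real.log (τ₂ d e f)) a b c)
              + 2 * px (px fun d e f => Real.log (τ₁ d e f)) a b c) t x y
        + 6 * px (fun a b c => py τ₁ a b c / τ₁ a b c) t x y
        + 6 * px (fun a b c => Real.log (τ₂ a b c / τ₁ a b c)) t x y
            * (2 * px (px fun d e f => Real.log (τ₂ d e f)) t x y)
        + 4 * (px (fun a b c => Real.log (τ₂ a b c / τ₁ a b c)) t x y)^3 = 0 := by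
  obtain ⟨a, ha, rfl⟩ := exists_contDiff_eq_exp hτ₁ hpos₁
  obtain ⟨b, hb, rfl⟩ := exists_contDiff_eq_exp hτ₂ hpos₂
  have h23 : (2 : WithTop ℕ∞) ≤ 3 := by norm_num
  have da := ha.differentiable three_ne_zero
  have db := hb.differentiable three_ne_zero
  rw [backlundSpace_exp (ha.of_le h23) (hb.of_le h23), exp_mul_exp_mul_eq_zero_iff] at hspace
  rw [backlundTime_exp ha hb, exp_mul_exp_mul_eq_zero_iff] at htime
  intro t x y
  have hpotential := congrFun₃ (potential_time_identity ha hb hspace htime) t x y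
  simp only [log_exp_div_exp, py_exp_div_exp da, Real.log_exp, pt_sub db da, px_sub db da,
    ← mul_assoc, px_const_mul_add_const_mul _ _ (differentiable_px_px hb le_rfl)
      (differentiable_px_px ha le_rfl)]
  simp only [Pi.add_apply, Pi.sub_apply, Pi.mul_apply, Pi.pow_apply, Pi.ofNat_apply] at hpotential ⊢
  linear_combination hpotential

/-- scalar identity from the time part of the bilinear Bäcklund
transformation for KP-II. -/
theorem bilinear_backlund_time_identity
    (τ₁ τ₂ : ℝ → ℝ → ℝ → ℝ)
    (hτ₁ : ContDiff ℝ (⊤ : ℕ∞) fun p : ℝ × ℝ × ℝ => τ₁ p.1 p.2.1 p.2.2)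
    (hτ₂ : ContDiff ℝ (⊤ : ℕ∞) fun p : ℝ × ℝ × ℝ => τ₂ p.1 p.2.1 p.2.2)
    (hpos₁ : ∀ t x y, 0 < τ₁ t x y) (hpos₂ : ∀ t x y, 0 < τ₂ t x y)
    (hBT₁ : ∀ t x y,
      τ₁ t x y * px (px τ₂) t x y - 2 * px τ₁ t x y * px τ₂ t x y
        + τ₂ t x y * px (px τ₁) t x y + τ₂ t x y * py τ₁ t x y
        - τ₁ t x y * py τ₂ t x y = 0)
    (hBT₂ : ∀ t x y,
      4 * (τ₁ t x y * pt τ₂ t x y - τ₂ t x y * pt τ₁ t x y)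
        + 3 * (τ₁ t x y * px (py τ₂) t x y - px τ₁ t x y * py τ₂ t x y
            - py τ₁ t x y * px τ₂ t x y + τ₂ t x y * px (py τ₁) t x y)
        + τ₁ t x y * px (px (px τ₂)) t x y
        - 3 * px τ₁ t x y * px (px τ₂) t x y
        + 3 * px (px τ₁) t x y * px τ₂ t x y
        - τ₂ t x y * px (px (px τ₁)) t x y = 0) :
    ∀ t x y,
      4 * pt (fun a b c => Real.log (τ₂ a b c / τ₁ a b c)) t x y
        + px (fun a b c =>
            2 * (2 * px (px fun d e f => Real.log (τ₂ d e f)) a b c)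
              + 2 * px (px fun d e f => Real.log (τ₁ d e f)) a b c) t x y
        + 6 * px (fun a b c => py τ₁ a b c / τ₁ a b c) t x y
        + 6 * px (fun a b c => Real.log (τ₂ a b c / τ₁ a b c)) t x y
            * (2 * px (px fun d e f => Real.log (τ₂ d e f)) t x y)
        + 4 * (px (fun a b c => Real.log (τ₂ a b c / τ₁ a b c)) t x y)^3 = 0 := by
  exact bilinear_backlund_time_identity_general τ₁ τ₂
    (contDiff_infty.mp hτ₁ 3) (contDiff_infty.mp hτ₂ 3) hpos₁ hpos₂
    (funext fun t => funext fun x => funext (hBT₁ t x))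
    (funext fun t => funext fun x => funext (hBT₂ t x))
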